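/- arXiv:1411.4732 — 3 statements merged into one kernel-verified Lean document; each statement's English description precedes it below -/
import Mathlib

section
/- Let Z and Y be jointly distributed random variables on finite types, with joint pmf p. If the conditional entropy H(Y|Z) = 0, then for every state y with p_Y(y) > 0, the specific information of Z about y equals the surprisal of y: ∑_z p(z|y) * logb 2 (p(z|y) / p_Z(z)) = logb 2 (1 / p_Y(y)) (where the sum ranges over z with p(z|y) > 0). -/
open Real Finset

/-- If `H(Y|Z) = 0`, then for every state `y` with `p_Y(y) > 0`, the specific
information of `Z` about `y` equals the surprisal of `y`.
Here `p : Z × Y → ℝ` is a joint pmf; `p_Y(y) = ∑ z, p (z, y)`, `p_Z(z) = ∑ y, p (z, y)`,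
and `p(z|y) = p (z, y) / p_Y(y)`.  (Terms with zero probability vanish automatically,
since `0 * logb 2 x = 0` and `logb 2` of junk values multiplies a zero factor.) -/
theorem stmt_0 {Z Y : Type*} [Fintype Z] [Fintype Y]
    (p : Z × Y → ℝ)
    (hnn : ∀ zy, 0 ≤ p zy)
    (hsum : ∑ zy, p zy = 1)
    (hcondEnt : -∑ z, ∑ y, p (z, y) * logb 2 (p (z, y) / ∑ y', p (z, y')) = 0)
    (y : Y) (hy : 0 < ∑ z, p (z, y)) :
    ∑ z, (p (z, y) / ∑ z', p (z', y)) *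
        logb 2 ((p (z, y) / ∑ z', p (z', y)) / ∑ y', p (z, y')) =
      logb 2 (1 / ∑ z, p (z, y)) := by
  have hle : ∀ z y, p (z, y) ≤ ∑ y', p (z, y') := fun z y =>
    Finset.single_le_sum (f := fun y' => p (z, y')) (fun i _ => hnn (z, i)) (Finset.mem_univ y)
  have hterm : ∀ z y, p (z, y) * logb 2 (p (z, y) / ∑ y', p (z, y')) ≤ 0 := by
    intro z y
    have h0 : 0 ≤ ∑ y', p (z, y') := (hnn (z, y)).trans (hle z y)
    exact mul_nonpos_of_nonneg_of_nonpos (hnn _)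
      (Real.logb_nonpos (by norm_num) (div_nonneg (hnn _) h0) (div_le_one_of_le₀ (hle z y) h0))
  have hz : ∀ z, ∑ y, p (z, y) * logb 2 (p (z, y) / ∑ y', p (z, y')) = 0 := by
    intro z
    exact (Finset.sum_eq_zero_iff_of_nonpos
      (fun z _ => Finset.sum_nonpos fun y _ => hterm z y)).1 (neg_eq_zero.1 hcondEnt) z
      (Finset.mem_univ z)
  have hzy : ∀ z y, p (z, y) * logb 2 (p (z, y) / ∑ y', p (z, y')) = 0 := by
    intro z y
    exact (Finset.sum_eq_zero_iff_of_nonpos (fun y _ => hterm z y)).1 (hz z) y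
      (Finset.mem_univ y)
  have key : ∀ z, (p (z, y) / ∑ z', p (z', y)) *
        logb 2 ((p (z, y) / ∑ z', p (z', y)) / ∑ y', p (z, y')) =
      (p (z, y) / ∑ z', p (z', y)) * logb 2 (1 / ∑ z', p (z', y)) := by
    intro z
    rcases (hnn (z, y)).eq_or_lt with h | h
    · rw [← h]; simp
    · have hS : 0 < ∑ y', p (z, y') := h.trans_le (hle z y)
      have hl := (mul_eq_zero.1 (hzy z y)).resolve_left h.ne'
      have h1 : p (z, y) / ∑ y', p (z, y') = 1 :=
        Real.eq_one_of_pos_of_logb_eq_zero (by norm_num) (div_pos h hS) hl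
      rw [div_right_comm, h1]
  rw [Finset.sum_congr rfl (fun z _ => key z), ← Finset.sum_mul, ← Finset.sum_div,
    div_self hy.ne', one_mul]
end

section
/- Let ι be a nonempty finite index type and let (X_i)_{i ∈ ι}, Z, and Y be jointly distributed random variables on finite types with joint pmf p. If H(Y|Z) = 0, then adding Z as an extra predictor does not change I_min: ∑_y p_Y(y) * min( I(Z:y), min_{i ∈ ι} I(X_i:y) ) = ∑_y p_Y(y) * min_{i ∈ ι} I(X_i:y), where both sums range over y with p_Y(y) > 0. (This is the equality case of Strong Monotonicity for the measure I_min.) -/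
open Real Finset

/- STATEMENT 2: Strong-monotonicity equality case for `I_min`: if `H(Y|Z) = 0`, then adding
`Z` as an extra predictor does not change `I_min`.  The joint pmf is
`p : (∀ i, X i) × Z × Y → ℝ`. -/

section Defs

variable {ι : Type*} [Fintype ι] [DecidableEq ι] {X : ι → Type*} [∀ i, Fintype (X i)]
  [∀ i, DecidableEq (X i)] {Z Y : Type*} [Fintype Z] [Fintype Y]

/-- Marginal of `Y`. -/
noncomputable def margY (p : (∀ i, X i) × Z × Y → ℝ) (y : Y) : ℝ :=
  ∑ x, ∑ z, p (x, z, y)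

/-- Marginal of `Z`. -/
noncomputable def margZ (p : (∀ i, X i) × Z × Y → ℝ) (z : Z) : ℝ :=
  ∑ x, ∑ y, p (x, z, y)

/-- Marginal of `(Z, Y)`. -/
noncomputable def margZY (p : (∀ i, X i) × Z × Y → ℝ) (z : Z) (y : Y) : ℝ :=
  ∑ x, p (x, z, y)

/-- Marginal of the predictor `X i`. -/
noncomputable def margXi (p : (∀ i, X i) × Z × Y → ℝ) (i : ι) (u : X i) : ℝ :=
  ∑ x, ∑ z, ∑ y, if x i = u then p (x, z, y) else 0

/-- Marginal of `(X i, Y)`. -/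
noncomputable def margXiY (p : (∀ i, X i) × Z × Y → ℝ) (i : ι) (u : X i) (y : Y) : ℝ :=
  ∑ x, ∑ z, if x i = u then p (x, z, y) else 0

/-- Conditional entropy `H(Y|Z)`. -/
noncomputable def condEntYZ (p : (∀ i, X i) × Z × Y → ℝ) : ℝ :=
  -∑ z, ∑ y, margZY p z y * logb 2 (margZY p z y / margZ p z)

/-- Specific information `I(Z : y)` of `Z` about the state `y`. -/
noncomputable def specInfoZ (p : (∀ i, X i) × Z × Y → ℝ) (y : Y) : ℝ :=
  ∑ z, (margZY p z y / margY p y) * logb 2 ((margZY p z y / margY p y) / margZ p z)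

/-- Specific information `I(X i : y)` of the predictor `X i` about the state `y`. -/
noncomputable def specInfoXi (p : (∀ i, X i) × Z × Y → ℝ) (i : ι) (y : Y) : ℝ :=
  ∑ u, (margXiY p i u y / margY p y) * logb 2 ((margXiY p i u y / margY p y) / margXi p i u)

end Defs

section Helpers

variable {ι : Type*} [Fintype ι] [DecidableEq ι] {X : ι → Type*} [∀ i, Fintype (X i)]
  [∀ i, DecidableEq (X i)] {Z Y : Type*} [Fintype Z] [Fintype Y]

lemma margZY_nonneg (p : (∀ i, X i) × Z × Y → ℝ) (hnn : ∀ a, 0 ≤ p a) (z : Z) (y : Y) :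
    0 ≤ margZY p z y := Finset.sum_nonneg fun _ _ => hnn _

lemma margZ_eq (p : (∀ i, X i) × Z × Y → ℝ) (z : Z) : margZ p z = ∑ y, margZY p z y := by
  unfold margZ margZY
  exact Finset.sum_comm

lemma margZY_le (p : (∀ i, X i) × Z × Y → ℝ) (hnn : ∀ a, 0 ≤ p a) (z : Z) (y : Y) :
    margZY p z y ≤ margZ p z := by
  rw [margZ_eq]
  exact Finset.single_le_sum (f := fun y => margZY p z y)
    (fun y _ => margZY_nonneg p hnn z y) (Finset.mem_univ y)

lemma sum_margZY (p : (∀ i, X i) × Z × Y → ℝ) (y : Y) : ∑ z, margZY p z y = margY p y := by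
  unfold margY margZY
  exact Finset.sum_comm

lemma margXiY_nonneg (p : (∀ i, X i) × Z × Y → ℝ) (hnn : ∀ a, 0 ≤ p a) (i : ι) (u : X i)
    (y : Y) : 0 ≤ margXiY p i u y := by
  refine Finset.sum_nonneg fun _ _ => Finset.sum_nonneg fun _ _ => ?_
  split_ifs
  · exact hnn _
  · exact le_rfl

lemma margXiY_le (p : (∀ i, X i) × Z × Y → ℝ) (hnn : ∀ a, 0 ≤ p a) (i : ι) (u : X i) (y : Y) :
    margXiY p i u y ≤ margXi p i u := by
  refine Finset.sum_le_sum fun x _ => Finset.sum_le_sum fun z _ => ?_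
  refine Finset.single_le_sum (f := fun y => if x i = u then p (x, z, y) else 0)
    (fun y _ => ?_) (Finset.mem_univ y)
  split_ifs
  · exact hnn _
  · exact le_rfl

lemma sum_margXiY (p : (∀ i, X i) × Z × Y → ℝ) (i : ι) (y : Y) :
    ∑ u, margXiY p i u y = margY p y := by
  unfold margXiY margY
  rw [Finset.sum_comm]
  refine Finset.sum_congr rfl fun x _ => ?_
  rw [Finset.sum_comm]
  refine Finset.sum_congr rfl fun z _ => ?_
  simp

lemma margZY_cases (p : (∀ i, X i) × Z × Y → ℝ) (hnn : ∀ a, 0 ≤ p a)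
    (h : condEntYZ p = 0) (z : Z) (y : Y) : margZY p z y = 0 ∨ margZY p z y = margZ p z := by
  have hle : ∀ z y, margZY p z y * logb 2 (margZY p z y / margZ p z) ≤ 0 := fun z y => by
    have h0 := margZY_nonneg p hnn z y
    have h1 := margZY_le p hnn z y
    have h2 := h0.trans h1
    exact mul_nonpos_of_nonneg_of_nonpos h0
      (Real.logb_nonpos one_lt_two (div_nonneg h0 h2) (div_le_one_of_le₀ h1 h2))
  have hs : ∑ z, ∑ y, margZY p z y * logb 2 (margZY p z y / margZ p z) = 0 :=
    neg_eq_zero.mp h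
  have e1 := (Finset.sum_eq_zero_iff_of_nonpos
    (fun z _ => Finset.sum_nonpos fun y _ => hle z y)).1 hs z (Finset.mem_univ z)
  have e2 := (Finset.sum_eq_zero_iff_of_nonpos (fun y _ => hle z y)).1 e1 y (Finset.mem_univ y)
  rcases (margZY_nonneg p hnn z y).eq_or_lt with h0 | h0
  · exact Or.inl h0.symm
  · right
    have hz : 0 < margZ p z := h0.trans_le (margZY_le p hnn z y)
    have hl := (mul_eq_zero.1 e2).resolve_left h0.ne'
    have hq : 0 < margZY p z y / margZ p z := div_pos h0 hz
    have := Real.eq_one_of_pos_of_logb_eq_zero one_lt_two hq hl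
    exact (div_eq_one_iff_eq hz.ne').1 this

lemma specInfoZ_eq (p : (∀ i, X i) × Z × Y → ℝ) (hnn : ∀ a, 0 ≤ p a)
    (h : condEntYZ p = 0) (y : Y) (hy : 0 < margY p y) :
    specInfoZ p y = logb 2 (1 / margY p y) := by
  have : ∀ z, (margZY p z y / margY p y) * logb 2 ((margZY p z y / margY p y) / margZ p z)
      = (margZY p z y / margY p y) * logb 2 (1 / margY p y) := fun z => by
    rcases (margZY_nonneg p hnn z y).eq_or_lt with h0 | h0
    · simp [← h0]
    · have e := (margZY_cases p hnn h z y).resolve_left h0.ne'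
      rw [← e, div_right_comm, div_self h0.ne']
  unfold specInfoZ
  rw [Finset.sum_congr rfl fun z _ => this z, ← Finset.sum_mul, ← Finset.sum_div, sum_margZY,
    div_self hy.ne', one_mul]

lemma specInfoXi_le (p : (∀ i, X i) × Z × Y → ℝ) (hnn : ∀ a, 0 ≤ p a)
    (i : ι) (y : Y) (hy : 0 < margY p y) :
    specInfoXi p i y ≤ logb 2 (1 / margY p y) := by
  have : ∀ u, (margXiY p i u y / margY p y) *
      logb 2 ((margXiY p i u y / margY p y) / margXi p i u)
      ≤ (margXiY p i u y / margY p y) * logb 2 (1 / margY p y) := fun u => by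
    rcases (margXiY_nonneg p hnn i u y).eq_or_lt with h0 | h0
    · simp [← h0]
    · have h1 := margXiY_le p hnn i u y
      have h2 := h0.trans_le h1
      refine mul_le_mul_of_nonneg_left ?_ (div_pos h0 hy).le
      refine Real.logb_le_logb_of_le one_lt_two (by positivity) ?_
      rw [div_right_comm]
      exact div_le_div_of_nonneg_right (div_le_one_of_le₀ h1 h2.le) hy.le
  unfold specInfoXi
  refine (Finset.sum_le_sum fun u _ => this u).trans ?_
  rw [← Finset.sum_mul, ← Finset.sum_div, sum_margXiY, div_self hy.ne', one_mul]

end Helpers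

theorem stmt_2 {ι : Type*} [Fintype ι] [DecidableEq ι] [Nonempty ι] {X : ι → Type*} [∀ i, Fintype (X i)]
    [∀ i, DecidableEq (X i)] {Z Y : Type*} [Fintype Z] [Fintype Y]
    (p : (∀ i, X i) × Z × Y → ℝ)
    (hnn : ∀ a, 0 ≤ p a)
    (hsum : ∑ a, p a = 1)
    (hcondEnt : condEntYZ p = 0) :
    ∑ y ∈ univ.filter (fun y => 0 < margY p y),
        margY p y * min (specInfoZ p y) (univ.inf' univ_nonempty fun i => specInfoXi p i y) =
      ∑ y ∈ univ.filter (fun y => 0 < margY p y),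
        margY p y * univ.inf' univ_nonempty (fun i => specInfoXi p i y) := by
  refine Finset.sum_congr rfl fun y hy => ?_
  have hy' : 0 < margY p y := (Finset.mem_filter.1 hy).2
  rw [min_eq_right]
  rw [specInfoZ_eq p hnn hcondEnt y hy']
  obtain ⟨i⟩ := ‹Nonempty ι›
  exact (Finset.inf'_le _ (Finset.mem_univ i)).trans (specInfoXi_le p hnn i y hy')
end

section
/- Let Q, X₁, and X₂ be jointly distributed random variables on finite types with joint pmf p. Suppose X₁ and X₂ are independent (p_{X₁,X₂}(x₁,x₂) = p_{X₁}(x₁) * p_{X₂}(x₂) for all x₁, x₂). If H(Q|X₁) = 0 and H(Q|X₂) = 0, then Q is almost surely constant: there exists q₀ with p_Q(q₀) = 1 (equivalently H(Q) = 0). (Hence the common-random-variable measure I_∧ assigns zero redundancy whenever the predictors are independent, as in the And example.) -/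
open Real Finset

/- STATEMENT 10: If `X₁` and `X₂` are independent and `H(Q|X₁) = 0` and `H(Q|X₂) = 0`,
then `Q` is almost surely constant: there is `q₀` with `p_Q(q₀) = 1`.
The joint pmf is `p : Q × X₁ × X₂ → ℝ`. -/

section Defs

variable {Q X₁ X₂ : Type*} [Fintype Q] [Fintype X₁] [Fintype X₂]

/-- Marginal of `Q`. -/
noncomputable def margQ (p : Q × X₁ × X₂ → ℝ) (q : Q) : ℝ :=
  ∑ x₁, ∑ x₂, p (q, x₁, x₂)

/-- Marginal of `X₁`. -/
noncomputable def margX1 (p : Q × X₁ × X₂ → ℝ) (x₁ : X₁) : ℝ :=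
  ∑ q, ∑ x₂, p (q, x₁, x₂)

/-- Marginal of `X₂`. -/
noncomputable def margX2 (p : Q × X₁ × X₂ → ℝ) (x₂ : X₂) : ℝ :=
  ∑ q, ∑ x₁, p (q, x₁, x₂)

/-- Marginal of `(X₁, X₂)`. -/
noncomputable def margX1X2 (p : Q × X₁ × X₂ → ℝ) (x₁ : X₁) (x₂ : X₂) : ℝ :=
  ∑ q, p (q, x₁, x₂)

/-- Marginal of `(Q, X₁)`. -/
noncomputable def margQX1 (p : Q × X₁ × X₂ → ℝ) (q : Q) (x₁ : X₁) : ℝ :=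
  ∑ x₂, p (q, x₁, x₂)

/-- Marginal of `(Q, X₂)`. -/
noncomputable def margQX2 (p : Q × X₁ × X₂ → ℝ) (q : Q) (x₂ : X₂) : ℝ :=
  ∑ x₁, p (q, x₁, x₂)

/-- Conditional entropy `H(Q|X₁)`. -/
noncomputable def condEntQX1 (p : Q × X₁ × X₂ → ℝ) : ℝ :=
  -∑ q, ∑ x₁, margQX1 p q x₁ * logb 2 (margQX1 p q x₁ / margX1 p x₁)

/-- Conditional entropy `H(Q|X₂)`. -/
noncomputable def condEntQX2 (p : Q × X₁ × X₂ → ℝ) : ℝ :=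
  -∑ q, ∑ x₂, margQX2 p q x₂ * logb 2 (margQX2 p q x₂ / margX2 p x₂)

end Defs

/-- If the conditional entropy vanishes, then `Q` is determined by `X`. -/
lemma det_of_condEnt {Q X : Type*} [Fintype Q] [Fintype X] (a : Q → X → ℝ) (m : X → ℝ)
    (ha : ∀ q x, 0 ≤ a q x) (hm : ∀ x, m x = ∑ q, a q x)
    (h : -∑ q, ∑ x, a q x * logb 2 (a q x / m x) = 0)
    {q r : Q} {x : X} (hq : 0 < a q x) (hr : 0 < a r x) : q = r := by
  classical
  have hle : ∀ q x, a q x ≤ m x := fun q x => by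
    rw [hm]
    exact Finset.single_le_sum (f := fun q => a q x) (fun i _ => ha i x) (Finset.mem_univ q)
  have hterm : ∀ q x, a q x * logb 2 (a q x / m x) ≤ 0 := fun q x => by
    have hm0 : 0 ≤ m x := (ha q x).trans (hle q x)
    exact mul_nonpos_of_nonneg_of_nonpos (ha q x)
      (Real.logb_nonpos (by norm_num) (div_nonneg (ha q x) hm0) (div_le_one_of_le₀ (hle q x) hm0))
  have hz : ∀ q x, a q x * logb 2 (a q x / m x) = 0 := fun q x => by
    have h' := neg_eq_zero.mp h
    rw [Finset.sum_eq_zero_iff_of_nonpos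
      (fun q _ => Finset.sum_nonpos fun x _ => hterm q x)] at h'
    have h'' := h' q (Finset.mem_univ q)
    rw [Finset.sum_eq_zero_iff_of_nonpos (fun x _ => hterm q x)] at h''
    exact h'' x (Finset.mem_univ x)
  have heq : ∀ q, 0 < a q x → a q x = m x := fun q hq => by
    have hmx : 0 < m x := hq.trans_le (hle q x)
    have hlog := (mul_eq_zero.mp (hz q x)).resolve_left hq.ne'
    by_contra hne
    have hlt : a q x / m x < 1 := (div_lt_one hmx).2 (lt_of_le_of_ne (hle q x) hne)
    have := Real.logb_neg (b := 2) (by norm_num) (div_pos hq hmx) hlt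
    linarith
  by_contra hne
  have h2 : ∑ i ∈ ({q, r} : Finset Q), a i x ≤ ∑ i, a i x :=
    Finset.sum_le_sum_of_subset_of_nonneg (Finset.subset_univ _) (fun i _ _ => ha i x)
  rw [Finset.sum_pair hne, ← hm] at h2
  have := heq q hq
  linarith

theorem stmt_10 {Q X₁ X₂ : Type*} [Fintype Q] [Fintype X₁] [Fintype X₂]
    (p : Q × X₁ × X₂ → ℝ)
    (hnn : ∀ a, 0 ≤ p a)
    (hsum : ∑ a, p a = 1)
    (hind : ∀ x₁ x₂, margX1X2 p x₁ x₂ = margX1 p x₁ * margX2 p x₂)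
    (h1 : condEntQX1 p = 0)
    (h2 : condEntQX2 p = 0) :
    ∃ q₀ : Q, margQ p q₀ = 1 := by
  classical
  have d1 : ∀ {q r x}, 0 < margQX1 p q x → 0 < margQX1 p r x → q = r := fun {q r x} =>
    det_of_condEnt (margQX1 p) (margX1 p) (fun q x => Finset.sum_nonneg fun _ _ => hnn _)
      (fun x => rfl) h1
  have d2 : ∀ {q r x}, 0 < margQX2 p q x → 0 < margQX2 p r x → q = r := fun {q r x} =>
    det_of_condEnt (margQX2 p) (margX2 p) (fun q x => Finset.sum_nonneg fun _ _ => hnn _)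
      (fun x => rfl) h2
  have p1 : ∀ {q x y}, 0 < p (q, x, y) → 0 < margQX1 p q x := fun {q x y} h =>
    h.trans_le (Finset.single_le_sum (f := fun y => p (q, x, y)) (fun _ _ => hnn _)
      (Finset.mem_univ y))
  have p2 : ∀ {q x y}, 0 < p (q, x, y) → 0 < margQX2 p q y := fun {q x y} h =>
    h.trans_le (Finset.single_le_sum (f := fun x => p (q, x, y)) (fun _ _ => hnn _)
      (Finset.mem_univ x))
  have m1 : ∀ {q x}, 0 < margQX1 p q x → 0 < margX1 p x := fun {q x} h =>
    h.trans_le (Finset.single_le_sum (f := fun q => margQX1 p q x)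
      (fun _ _ => Finset.sum_nonneg fun _ _ => hnn _) (Finset.mem_univ q))
  have m2 : ∀ {q x}, 0 < margQX2 p q x → 0 < margX2 p x := fun {q x} h =>
    h.trans_le (Finset.single_le_sum (f := fun q => margQX2 p q x)
      (fun _ _ => Finset.sum_nonneg fun _ _ => hnn _) (Finset.mem_univ q))
  obtain ⟨⟨q₀, x₁, x₂⟩, -, h0⟩ : ∃ a ∈ Finset.univ, 0 < p a :=
    (Finset.sum_pos_iff_of_nonneg (fun _ _ => hnn _)).1 (hsum ▸ one_pos)
  have key : ∀ q y₁ y₂, q ≠ q₀ → p (q, y₁, y₂) = 0 := by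
    intro q y₁ y₂ hne
    by_contra hp
    have hp' : 0 < p (q, y₁, y₂) := lt_of_le_of_ne (hnn _) (Ne.symm hp)
    have hpos : 0 < margX1X2 p x₁ y₂ := by
      rw [hind]
      exact mul_pos (m1 (p1 h0)) (m2 (p2 hp'))
    obtain ⟨r, -, hr⟩ := (Finset.sum_pos_iff_of_nonneg (fun _ _ => hnn _)).1 hpos
    exact hne ((d2 (p2 hp') (p2 hr)).trans (d1 (p1 hr) (p1 h0)))
  refine ⟨q₀, ?_⟩
  rw [← hsum, Fintype.sum_prod_type]
  rw [Finset.sum_eq_single q₀ (fun q _ hq => Finset.sum_eq_zero fun y _ => key q y.1 y.2 hq)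
    (fun h => absurd (Finset.mem_univ _) h)]
  rw [Fintype.sum_prod_type]
  rfl
end
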